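/- Let a ∈ ℝ with a ≠ 0, and let q be the complex-valued quadratic form on ℝ^{4n} (with variables (x,v,ξ,η) ∈ ℝⁿ×ℝⁿ×ℝⁿ×ℝⁿ) of the Kramers–Fokker–Planck operator with quadratic potential, q(x,v,ξ,η) = |η|² + (1/4)|v|² + i(⟨v,ξ⟩ − a⟨x,η⟩). Then the singular space of q is reduced to zero: S = Ker(Re F) ∩ Ker(Re F · Im F) ∩ ℝ^{4n} = {0}, where F is the Hamilton map of q. -/

import Mathlib

noncomputable section

open Matrix

/-- The phase space index type for `ℝ^{4n}`, with variables `(x, v, ξ, η)`: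
`x i = X (inl (inl i))`, `v i = X (inl (inr i))`, `ξ i = X (inr (inl i))`,
`η i = X (inr (inr i))`. -/
abbrev PS (n : ℕ) := (Fin n ⊕ Fin n) ⊕ (Fin n ⊕ Fin n)

/-- The standard symplectic matrix `J = [[0, I], [-I, 0]]` on `ℝ^{2N}` (complexified). -/
def JmatG (m : Type*) [Fintype m] [DecidableEq m] : Matrix (m ⊕ m) (m ⊕ m) ℂ :=
  Matrix.fromBlocks 0 1 (-1) 0

/-- The real part `Re F` of a complex matrix, viewed as a complex matrix. -/
def matRe {ι : Type*} (F : Matrix ι ι ℂ) : Matrix ι ι ℂ := F.map fun z => ((z.re : ℝ) : ℂ)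

/-- The imaginary part `Im F` of a complex matrix, viewed as a complex matrix. -/
def matIm {ι : Type*} (F : Matrix ι ι ℂ) : Matrix ι ι ℂ := F.map fun z => ((z.im : ℝ) : ℂ)

/-- The canonical embedding of a real vector into `ℂ^ι`. -/
def cvec {ι : Type*} (X : ι → ℝ) : ι → ℂ := fun i => (X i : ℂ)

end

/-!
A symmetric matrix is determined by its quadratic form, so `F` sends `(x, v, ξ, η)` to
`((i/2) v, η - (ia/2) x, (ia/2) η, -(1/4) v - (i/2) ξ)`. On real vectors, `Re F` therefore kills
exactly those with `v = η = 0`, while `Im F` carries `x` and `ξ` to the `v` and `η` components, up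
to the nonzero factors `-a/2` and `-1/2`. The two kernel conditions thus annihilate all four
components.
-/

open Matrix

section General

variable {ι : Type*}

theorem cvec_eq_zero_iff {X : ι → ℝ} : cvec X = 0 ↔ X = 0 := by
  simp [cvec, funext_iff]

variable [Fintype ι]

theorem matrix_eq_of_isSymm_of_dotProduct_mulVec_self_eq {K : Type*} [Field K]
    [NeZero (2 : K)] {A B : Matrix ι ι K} (hA : A.IsSymm) (hB : B.IsSymm)
    (h : ∀ X, X ⬝ᵥ A *ᵥ X = X ⬝ᵥ B *ᵥ X) : A = B := by
  classical
  refine Matrix.toBilin'.injective (LinearMap.BilinForm.ext_of_isSymm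
    (isSymm_toBilin'_iff_isSymm.2 hA) (isSymm_toBilin'_iff_isSymm.2 hB) fun X => ?_)
  simpa only [Matrix.toBilin'_apply'] using h X

theorem matRe_mulVec_cvec (F : Matrix ι ι ℂ) (X : ι → ℝ) :
    matRe F *ᵥ cvec X = cvec fun i => ((F *ᵥ cvec X) i).re := by
  ext i
  simp [matRe, cvec, mulVec, dotProduct]

theorem matIm_mulVec_cvec (F : Matrix ι ι ℂ) (X : ι → ℝ) :
    matIm F *ᵥ cvec X = cvec fun i => ((F *ᵥ cvec X) i).im := by
  ext i
  simp [matIm, cvec, mulVec, dotProduct]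

theorem JmatG_mulVec_sumElim [DecidableEq ι] (p r : ι → ℂ) :
    JmatG ι *ᵥ Sum.elim p r = Sum.elim r (-p) := by
  simp [JmatG, fromBlocks_mulVec, neg_mulVec]

end General

section PhaseSpace

variable {n : ℕ} {R : Type*}

/-- The point `(x, v, ξ, η)` of phase space. The coordinates lie in an arbitrary type `R`, to cover
both real phase space and its complexification. -/
def phasePoint (x v ξ η : Fin n → R) : PS n → R :=
  Sum.elim (Sum.elim x v) (Sum.elim ξ η)

theorem exists_eq_phasePoint (X : PS n → R) : ∃ x v ξ η, X = phasePoint x v ξ η :=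
  ⟨fun i => X (.inl (.inl i)), fun i => X (.inl (.inr i)), fun i => X (.inr (.inl i)),
    fun i => X (.inr (.inr i)), by ext ((i | i) | (i | i)) <;> rfl⟩

theorem phasePoint_eq_zero_iff [Zero R] {x v ξ η : Fin n → R} :
    phasePoint x v ξ η = 0 ↔ (x = 0 ∧ v = 0) ∧ ξ = 0 ∧ η = 0 := by
  simp [phasePoint, funext_iff]

theorem phasePoint_dotProduct_phasePoint [NonUnitalNonAssocSemiring R]
    (x v ξ η x' v' ξ' η' : Fin n → R) :
    phasePoint x v ξ η ⬝ᵥ phasePoint x' v' ξ' η' = x ⬝ᵥ x' + v ⬝ᵥ v' + (ξ ⬝ᵥ ξ' + η ⬝ᵥ η') := by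
  simp only [phasePoint, sumElim_dotProduct_sumElim]

theorem cvec_phasePoint (x v ξ η : Fin n → ℝ) :
    cvec (phasePoint x v ξ η) = phasePoint (cvec x) (cvec v) (cvec ξ) (cvec η) := by
  ext ((i | i) | (i | i)) <;> rfl

theorem JmatG_mulVec_phasePoint (x v ξ η : Fin n → ℂ) :
    JmatG (Fin n ⊕ Fin n) *ᵥ phasePoint x v ξ η = phasePoint ξ η (-x) (-v) := by
  rw [phasePoint, JmatG_mulVec_sumElim, phasePoint, Sum.elim_neg_neg]

end PhaseSpace

section KramersFokkerPlanck

variable {n : ℕ}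

/-- The symmetric matrix of the Kramers–Fokker–Planck form
`|η|² + (1/4)|v|² + i(⟨v,ξ⟩ - a⟨x,η⟩)`, in blocks for the variables `(x, v, ξ, η)`. -/
noncomputable def kfpMatrix (n : ℕ) (a : ℝ) : Matrix (PS n) (PS n) ℂ :=
  fromBlocks
    (fromBlocks 0 0 0 ((1 / 4 : ℂ) • 1))
    (fromBlocks 0 (-(Complex.I * a / 2) • 1) ((Complex.I / 2) • 1) 0)
    (fromBlocks 0 ((Complex.I / 2) • 1) (-(Complex.I * a / 2) • 1) 0)
    (fromBlocks 0 0 0 1)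

theorem kfpMatrix_isSymm (n : ℕ) (a : ℝ) : (kfpMatrix n a).IsSymm := by
  simp [kfpMatrix, IsSymm, fromBlocks_transpose]

theorem kfpMatrix_mulVec_phasePoint (a : ℝ) (x v ξ η : Fin n → ℂ) :
    kfpMatrix n a *ᵥ phasePoint x v ξ η =
      phasePoint (-(Complex.I * a / 2) • η) ((1 / 4 : ℂ) • v + (Complex.I / 2) • ξ)
        ((Complex.I / 2) • v) (-(Complex.I * a / 2) • x + η) := by
  ext ((i | i) | (i | i)) <;>
    simp [kfpMatrix, phasePoint, fromBlocks_mulVec, smul_mulVec, neg_mulVec, Function.comp_def]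

theorem phasePoint_dotProduct_kfpMatrix_mulVec (a : ℝ) (x v ξ η : Fin n → ℂ) :
    phasePoint x v ξ η ⬝ᵥ kfpMatrix n a *ᵥ phasePoint x v ξ η =
      η ⬝ᵥ η + (1 / 4 : ℂ) * (v ⬝ᵥ v) + Complex.I * (v ⬝ᵥ ξ - a * (x ⬝ᵥ η)) := by
  rw [kfpMatrix_mulVec_phasePoint, phasePoint_dotProduct_phasePoint]
  simp only [dotProduct_add, dotProduct_smul, smul_eq_mul, dotProduct_comm ξ v,
    dotProduct_comm η x]
  ring

/-- The Hamilton map `JQ` of the Kramers–Fokker–Planck form, `Q` being its symmetric matrix. -/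
noncomputable def kfpHamiltonMap (n : ℕ) (a : ℝ) : Matrix (PS n) (PS n) ℂ :=
  JmatG (Fin n ⊕ Fin n) * kfpMatrix n a

theorem kfpHamiltonMap_mulVec_phasePoint (a : ℝ) (x v ξ η : Fin n → ℂ) :
    kfpHamiltonMap n a *ᵥ phasePoint x v ξ η =
      phasePoint ((Complex.I / 2) • v) (-(Complex.I * a / 2) • x + η)
        ((Complex.I * a / 2) • η) (-((1 / 4 : ℂ) • v + (Complex.I / 2) • ξ)) := by
  rw [kfpHamiltonMap, ← mulVec_mulVec, kfpMatrix_mulVec_phasePoint, JmatG_mulVec_phasePoint,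
    neg_smul _ η, neg_neg]

theorem matRe_kfpHamiltonMap_mulVec (a : ℝ) (x v ξ η : Fin n → ℝ) :
    matRe (kfpHamiltonMap n a) *ᵥ cvec (phasePoint x v ξ η) =
      cvec (phasePoint 0 η 0 (-(1 / 4 : ℝ) • v)) := by
  rw [matRe_mulVec_cvec, cvec_phasePoint, kfpHamiltonMap_mulVec_phasePoint]
  congr 1
  ext ((i | i) | (i | i)) <;> simp [phasePoint, cvec]

theorem matIm_kfpHamiltonMap_mulVec (a : ℝ) (x v ξ η : Fin n → ℝ) :
    matIm (kfpHamiltonMap n a) *ᵥ cvec (phasePoint x v ξ η) =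
      cvec (phasePoint ((1 / 2 : ℝ) • v) (-(a / 2) • x) ((a / 2) • η) (-(1 / 2 : ℝ) • ξ)) := by
  rw [matIm_mulVec_cvec, cvec_phasePoint, kfpHamiltonMap_mulVec_phasePoint]
  congr 1
  ext ((i | i) | (i | i)) <;> simp [phasePoint, cvec]

theorem matRe_kfpHamiltonMap_mulVec_eq_zero_iff {a : ℝ} {x v ξ η : Fin n → ℝ} :
    matRe (kfpHamiltonMap n a) *ᵥ cvec (phasePoint x v ξ η) = 0 ↔ v = 0 ∧ η = 0 := by
  rw [matRe_kfpHamiltonMap_mulVec, cvec_eq_zero_iff, phasePoint_eq_zero_iff]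
  simp [and_comm]

theorem matRe_mul_matIm_kfpHamiltonMap_mulVec_eq_zero_iff {a : ℝ} (ha : a ≠ 0)
    {x v ξ η : Fin n → ℝ} :
    (matRe (kfpHamiltonMap n a) * matIm (kfpHamiltonMap n a)) *ᵥ cvec (phasePoint x v ξ η) = 0 ↔
      x = 0 ∧ ξ = 0 := by
  rw [← mulVec_mulVec, matIm_kfpHamiltonMap_mulVec, matRe_kfpHamiltonMap_mulVec_eq_zero_iff]
  simp [ha]

theorem kfpHamiltonMap_kernels_inter_eq_zero_iff {a : ℝ} (ha : a ≠ 0) (X : PS n → ℝ) :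
    matRe (kfpHamiltonMap n a) *ᵥ cvec X = 0 ∧
      (matRe (kfpHamiltonMap n a) * matIm (kfpHamiltonMap n a)) *ᵥ cvec X = 0 ↔ X = 0 := by
  obtain ⟨x, v, ξ, η, rfl⟩ := exists_eq_phasePoint X
  rw [matRe_kfpHamiltonMap_mulVec_eq_zero_iff,
    matRe_mul_matIm_kfpHamiltonMap_mulVec_eq_zero_iff ha, phasePoint_eq_zero_iff]
  tauto

end KramersFokkerPlanck

/-- Let `a ≠ 0` and let
`q(x,v,ξ,η) = |η|² + (1/4)|v|² + i(⟨v,ξ⟩ - a⟨x,η⟩)` be the quadratic symbol of the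
Kramers–Fokker–Planck operator with quadratic potential, with symmetric matrix `Q` and Hamilton
map `F = JQ`. Then the singular space of `q` is reduced to zero:
`S = Ker(Re F) ∩ Ker(Re F · Im F) ∩ ℝ^{4n} = {0}`. -/
theorem statement_16 (n : ℕ) (hn : 0 < n) (a : ℝ) (ha : a ≠ 0)
    (Q : Matrix (PS n) (PS n) ℂ) (hQsymm : Q.IsSymm)
    (hq : ∀ X : PS n → ℂ,
      ∑ i, X i * Q.mulVec X i
        = (∑ i, X (Sum.inr (Sum.inr i)) ^ 2)
          + (1 / 4 : ℂ) * ∑ i, X (Sum.inl (Sum.inr i)) ^ 2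
          + Complex.I * ((∑ i, X (Sum.inl (Sum.inr i)) * X (Sum.inr (Sum.inl i)))
              - (a : ℂ) * ∑ i, X (Sum.inl (Sum.inl i)) * X (Sum.inr (Sum.inr i))))
    (F : Matrix (PS n) (PS n) ℂ) (hF : F = JmatG (Fin n ⊕ Fin n) * Q) :
    ∀ X : PS n → ℝ,
      ((∀ j < 4 * n, (matRe F * matIm F ^ j).mulVec (cvec X) = 0)
        ↔ ((matRe F).mulVec (cvec X) = 0 ∧ (matRe F * matIm F).mulVec (cvec X) = 0))
      ∧ (((matRe F).mulVec (cvec X) = 0 ∧ (matRe F * matIm F).mulVec (cvec X) = 0)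
        ↔ X = 0) := by
  have hQ : Q = kfpMatrix n a := by
    refine matrix_eq_of_isSymm_of_dotProduct_mulVec_self_eq hQsymm
      (kfpMatrix_isSymm n a) fun X => ?_
    obtain ⟨x, v, ξ, η, rfl⟩ := exists_eq_phasePoint X
    rw [phasePoint_dotProduct_kfpMatrix_mulVec]
    simpa only [dotProduct, phasePoint, Sum.elim_inl, Sum.elim_inr, sq] using
      hq (phasePoint x v ξ η)
  obtain rfl : F = kfpHamiltonMap n a := by rw [hF, hQ, kfpHamiltonMap]
  intro X
  have hS := kfpHamiltonMap_kernels_inter_eq_zero_iff ha X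
  refine ⟨⟨fun h => ⟨?_, ?_⟩, fun h j _ => ?_⟩, hS⟩
  · simpa only [pow_zero, mul_one] using h 0 (by lia)
  · simpa only [pow_one] using h 1 (by lia)
  · rw [cvec_eq_zero_iff.2 (hS.1 h), mulVec_zero]
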